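/- arXiv:1703.09378 — 2 statements merged into one kernel-verified Lean document; each statement's English description precedes it below -/
import Mathlib

section
/- Let k ≥ 2 and let G be a finite 2-connected simple graph of order n ≥ 2k with m edges, where 2m ≥ (2k−1)(n−1) + 2. Then G is k-color connectable and cc_k(G) = k. -/
open SimpleGraph

/-- `c` is a `k`-color connecting edge-coloring of `G`: between every pair of distinct
vertices there is a path whose edges use at least `k` different colors. -/
def SimpleGraph.IsKColorConnecting {V : Type*} (G : SimpleGraph V) (k : ℕ)
    (c : Sym2 V → ℕ) : Prop :=
  ∀ u v : V, u ≠ v → ∃ p : G.Walk u v, p.IsPath ∧ k ≤ (p.edges.map c).toFinset.card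

/-- `G` is `k`-color connectable: it admits a `k`-color connecting coloring. -/
def SimpleGraph.KColorConnectable {V : Type*} (G : SimpleGraph V) (k : ℕ) : Prop :=
  ∃ c : Sym2 V → ℕ, G.IsKColorConnecting k c

/-- The `k`-color connection number `cc_k(G)`: the minimum number of colors used on the
edges of `G` by a `k`-color connecting coloring. -/
noncomputable def SimpleGraph.ccConn {V : Type*} (G : SimpleGraph V) (k : ℕ) : ℕ :=
  sInf {n : ℕ | ∃ c : Sym2 V → ℕ, G.IsKColorConnecting k c ∧ (c '' G.edgeSet).ncard = n}

/-- A graph is 2-connected if it has at least 3 vertices, is connected, and remains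
connected after deleting any single vertex. -/
def SimpleGraph.IsTwoConnected {V : Type*} (G : SimpleGraph V) : Prop :=
  3 ≤ Nat.card V ∧ G.Connected ∧ ∀ v : V, (G.induce {v}ᶜ).Connected

/-!
By the Erdős–Gallai theorem, the bound on the number of edges forces a cycle `C` of length at least
`2 * k`. Color the edges of `C` periodically with the colors `0, …, k - 1`, and all other edges
arbitrarily with these colors. Two vertices of `C` cut it into two arcs, and one arc contains all
`k` colors: if the first misses color `i` and the second misses color `j`, then two edges of color
`i` would lie together on one arc and two interleaving edges of color `j` on the other.
Since `G` is 2-connected, all of `G` is reached from `C` by adding ears, and every ear preserves the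
property that any two vertices are joined by a path with `k` colors, whatever the colors on the ear:
two vertices of the ear are joined through the old part along the two ends of the ear.

For the Erdős–Gallai theorem, suppose that no cycle is longer than `s`, and take a longest path.
Rotating an initial segment of it with at most `s` vertices gives a set `R` of new starting points,
whose neighbors all lie in the segment. If `x` is a neighbor of `w ∈ R`, then the predecessor of `x`
on the rotated path starting in `w` is in `R` again, so `w` has at most `#R` neighbors. Deleting `R`
then destroys few enough edges for induction.
-/

section LongCycles

open scoped Finset

variable {V : Type*} {G : SimpleGraph V} {A U R : Finset V} {s : ℕ} {u v w x z : V}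

open Classical in
/-- The vertices from which a path of `G` runs to `z` through exactly the vertices of `A`, that is,
the starting points of the Hamiltonian paths of `G[A]` that end in `z`. In the proof of the
Erdős–Gallai bound they are the endpoints reachable by rotating an initial segment of a longest
path. -/
noncomputable def spanningPathStarts (G : SimpleGraph V) (A : Finset V) (z : V) : Finset V :=
  {w ∈ A | ∃ p : G.Walk w z, p.IsPath ∧ ∀ x, x ∈ p.support ↔ x ∈ A}

lemma spanningPathStarts_subset : spanningPathStarts G A z ⊆ A := by
  classical exact Finset.filter_subset _ _

lemma mem_spanningPathStarts :
    w ∈ spanningPathStarts G A z ↔ ∃ p : G.Walk w z, p.IsPath ∧ ∀ x, x ∈ p.support ↔ x ∈ A := by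
  classical
  rw [spanningPathStarts, Finset.mem_filter, and_iff_right_iff_imp]
  rintro ⟨p, -, hpA⟩
  exact (hpA w).1 p.start_mem_support

-- Pósa rotation: if `y` precedes `x` on the path `w ⋯ y x ⋯ z`, then `y ⋯ w x ⋯ z` is a path too.
lemma exists_mem_darts_fst_mem_spanningPathStarts {p : G.Walk w z} (hp : p.IsPath)
    (hpA : ∀ x, x ∈ p.support ↔ x ∈ A) (hwx : G.Adj w x) (hx : x ∈ A) :
    ∃ d ∈ p.darts, d.snd = x ∧ d.fst ∈ spanningPathStarts G A z := by
  obtain ⟨q, r, rfl⟩ := Walk.mem_support_iff_exists_append.1 ((hpA x).2 hx)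
  obtain ⟨y, q, hyx, rfl⟩ : ∃ y, ∃ q' : G.Walk w y, ∃ h : G.Adj y x, q = q'.concat h :=
    ⟨_, q.dropLast, q.adj_penultimate (Walk.not_nil_of_ne hwx.ne), (Walk.concat_dropLast _).symm⟩
  rw [Walk.concat_append] at hp hpA
  have hperm : (q.reverse.append (Walk.cons hwx r)).support.Perm
      (q.append (Walk.cons hyx r)).support := by
    simpa [Walk.support_append] using q.support.reverse_perm.append_right r.support
  refine ⟨⟨(y, x), hyx⟩, by simp [Walk.darts_append], rfl, mem_spanningPathStarts.2
    ⟨q.reverse.append (Walk.cons hwx r), ?_, fun t ↦ hperm.mem_iff.trans (hpA t)⟩⟩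
  exact Walk.IsPath.mk' (hperm.nodup_iff.2 hp.support_nodup)

lemma card_le_card_spanningPathStarts {N : Finset V} (hw : w ∈ spanningPathStarts G A z)
    (hNA : N ⊆ A) (hN : ∀ x ∈ N, G.Adj w x) : #N ≤ #(spanningPathStarts G A z) := by
  obtain ⟨p, hp, hpA⟩ := mem_spanningPathStarts.1 hw
  refine Finset.card_le_card_of_forall_subsingleton
    (fun x y ↦ ∃ d ∈ p.darts, d.snd = x ∧ d.fst = y) (fun x hx ↦ ?_) ?_
  · obtain ⟨d, hd, hdx, hdR⟩ :=
      exists_mem_darts_fst_mem_spanningPathStarts hp hpA (hN x hx) (hNA hx)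
    exact ⟨d.fst, hdR, d, hd, hdx, rfl⟩
  · have hfst : (p.darts.map (·.fst)).Nodup := by
      rw [Walk.map_fst_darts]
      exact hp.support_nodup.sublist (List.dropLast_sublist _)
    rintro - - - ⟨-, d, hd, rfl, rfl⟩ - ⟨-, d', hd', rfl, hdd'⟩
    rw [List.inj_on_of_nodup_map hfst hd' hd hdd']

lemma isCycle_cons_of_two_le_length {p : G.Walk u v} (hp : p.IsPath) (h : G.Adj v u)
    (hlen : 2 ≤ p.length) : (Walk.cons h p).IsCycle := by
  refine (Walk.cons_isCycle_iff p h).2 ⟨hp, fun he ↦ ?_⟩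
  rw [Sym2.eq_swap] at he
  have := hp.length_eq_one_of_mem_edges he
  lia

lemma exists_longest_isPath_forall_mem (hU : U.Nonempty) :
    ∃ u v, ∃ p : G.Walk u v, p.IsPath ∧ (∀ x ∈ p.support, x ∈ U) ∧
      ∀ u' v' (q : G.Walk u' v'), q.IsPath → (∀ x ∈ q.support, x ∈ U) → q.length ≤ p.length := by
  classical
  let L : Set ℕ := {n | ∃ u v, ∃ p : G.Walk u v, p.IsPath ∧ (∀ x ∈ p.support, x ∈ U) ∧ p.length = n}
  have hL : BddAbove L := by
    refine ⟨#U, ?_⟩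
    rintro - ⟨u, v, p, hp, hpU, rfl⟩
    have hcard : #p.support.toFinset ≤ #U :=
      Finset.card_le_card fun x hx ↦ hpU x (List.mem_toFinset.1 hx)
    rw [List.toFinset_card_of_nodup hp.support_nodup, Walk.length_support] at hcard
    lia
  obtain ⟨u₀, hu₀⟩ := hU
  have hne : L.Nonempty := ⟨0, u₀, u₀, .nil, .nil, by simpa using hu₀, rfl⟩
  obtain ⟨u, v, p, hp, hpU, hlen⟩ := Nat.sSup_mem hne hL
  exact ⟨u, v, p, hp, hpU, fun u' v' q hq hqU ↦ hlen ▸ le_csSup hL ⟨u', v', q, hq, hqU, rfl⟩⟩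

lemma exists_isPath_append_of_mem_spanningPathStarts {a : G.Walk u z} {b : G.Walk z v}
    (hab : (a.append b).IsPath) (haA : ∀ x, x ∈ a.support ↔ x ∈ A)
    (hw : w ∈ spanningPathStarts G A z) :
    ∃ a' : G.Walk w z, (a'.append b).IsPath ∧ a'.support.Perm a.support := by
  obtain ⟨a', ha', haA'⟩ := mem_spanningPathStarts.1 hw
  have hperm : a'.support.Perm a.support :=
    (List.perm_ext_iff_of_nodup ha'.support_nodup hab.of_append_left.support_nodup).2
      fun x ↦ (haA' x).trans (haA x).symm
  have hperm' : (a'.append b).support.Perm (a.append b).support := by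
    simpa only [Walk.support_append] using hperm.append_right _
  exact ⟨a', .mk' (hperm'.nodup_iff.2 hab.support_nodup), hperm⟩

lemma eq_of_adj_of_forall_isCycle_length_le (hs : 2 ≤ s)
    (hcyc : ∀ u (c : G.Walk u u), c.IsCycle → c.length ≤ s) {a : G.Walk w z} {b : G.Walk z v}
    (hab : (a.append b).IsPath) (ha : s ≤ a.length + 1) (hx : x ∈ b.support) (hwx : G.Adj w x) :
    x = z := by
  obtain ⟨b₁, b₂, rfl⟩ := Walk.mem_support_iff_exists_append.1 hx
  by_contra hxz
  have hb₁ : b₁.length ≠ 0 := fun h ↦ hxz (Walk.eq_of_length_eq_zero h).symm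
  rw [Walk.append_assoc] at hab
  have hcycle : (Walk.cons hwx.symm (a.append b₁)).IsCycle :=
    isCycle_cons_of_two_le_length hab.of_append_left _ (by rw [Walk.length_append]; lia)
  have hle := hcyc _ _ hcycle
  rw [Walk.length_cons, Walk.length_append] at hle
  lia

/- The rotated segment spans the first `s` vertices of a longest path of `G[U]`, or all of them if
there are fewer. A neighbour of a rotated endpoint outside this segment would extend the longest
path or close up a cycle of length more than `s`. -/
lemma exists_spanningPathStarts_nonempty_forall_adj_mem (hs : 2 ≤ s)
    (hcyc : ∀ u (c : G.Walk u u), c.IsCycle → c.length ≤ s) (hU : U.Nonempty) :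
    ∃ A ⊆ U, #A ≤ s ∧ ∃ z, (spanningPathStarts G A z).Nonempty ∧
      ∀ w ∈ spanningPathStarts G A z, ∀ x ∈ U, G.Adj w x → x ∈ A := by
  classical
  obtain ⟨u, v, p, hp, hpU, hmax⟩ := exists_longest_isPath_forall_mem (G := G) hU
  obtain ⟨z, a, b, rfl, hshort, hsplit⟩ : ∃ z, ∃ (a : G.Walk u z) (b : G.Walk z v),
      p = a.append b ∧ a.length + 1 ≤ s ∧ (¬b.Nil → a.length + 1 = s) := by
    refine ⟨_, p.take (s - 1), p.drop (s - 1), (p.append_take_drop_eq _).symm, ?_, ?_⟩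
    · grind [Walk.take_length]
    · grind [Walk.take_length, Walk.nil_drop_iff]
  have haA : ∀ x, x ∈ a.support ↔ x ∈ a.support.toFinset := fun x ↦ List.mem_toFinset.symm
  refine ⟨a.support.toFinset, fun x hx ↦ hpU x ?_, ?_, z,
    ⟨u, mem_spanningPathStarts.2 ⟨a, hp.of_append_left, haA⟩⟩, fun w hw x hxU hwx ↦ ?_⟩
  · exact Walk.support_subset_support_append_left _ _ ((haA x).2 hx)
  · rwa [List.toFinset_card_of_nodup hp.of_append_left.support_nodup, Walk.length_support]
  obtain ⟨a', hpath, hperm⟩ := exists_isPath_append_of_mem_spanningPathStarts hp haA hw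
  have hlen : a'.length = a.length := by simpa using hperm.length_eq
  rw [← haA]
  by_contra hxa
  by_cases hxb : x ∈ b.support
  · have hxz : x ≠ z := by rintro rfl; exact hxa a.end_mem_support
    have hb : ¬b.Nil := fun hb ↦ hxz (by simpa [Walk.nil_iff_support_eq.1 hb] using hxb)
    exact hxz (eq_of_adj_of_forall_isCycle_length_le hs hcyc hpath
      (hlen ▸ (hsplit hb).ge) hxb hwx)
  · have hxp : x ∉ (a'.append b).support := by
      rw [Walk.mem_support_append_iff, hperm.mem_iff]
      exact not_or.2 ⟨hxa, hxb⟩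
    have hlonger := hmax _ _ (Walk.cons hwx.symm (a'.append b)) (hpath.cons hxp) fun y hy ↦ ?_
    · simp only [Walk.length_cons, Walk.length_append] at hlonger
      lia
    · rw [Walk.support_cons, List.mem_cons, Walk.mem_support_append_iff, hperm.mem_iff,
        ← Walk.mem_support_append_iff] at hy
      exact hy.elim (· ▸ hxU) (hpU y)

lemma card_interedges_eq_sum_card_filter [DecidableRel G.Adj] (S T : Finset V) :
    #(G.interedges S T) = ∑ w ∈ S, #{x ∈ T | G.Adj w x} := by
  simp only [interedges_def, Finset.card_filter, Finset.sum_product]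

lemma card_interedges_le_card_mul [DecidableRel G.Adj] {S T : Finset V} {n : ℕ}
    (h : ∀ w ∈ S, #{x ∈ T | G.Adj w x} ≤ n) : #(G.interedges S T) ≤ #S * n := by
  rw [card_interedges_eq_sum_card_filter, ← smul_eq_mul]
  exact Finset.sum_le_card_nsmul _ _ _ h

lemma card_interedges_comm [DecidableRel G.Adj] (S T : Finset V) :
    #(G.interedges S T) = #(G.interedges T S) :=
  have := G.symm
  Rel.card_interedges_comm S T

lemma card_interedges_self_eq_sdiff_add [DecidableRel G.Adj] [DecidableEq V] (hR : R ⊆ U) :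
    #(G.interedges U U) =
      #(G.interedges (U \ R) (U \ R)) + #(G.interedges R (U \ R)) + #(G.interedges R U) := by
  have hsplit (T : Finset V) :
      #(G.interedges U T) = #(G.interedges (U \ R) T) + #(G.interedges R T) := by
    simp only [card_interedges_eq_sum_card_filter, Finset.sum_sdiff hR]
  rw [hsplit U, card_interedges_comm (U \ R) U, hsplit (U \ R)]

lemma card_interedges_self_add_card_le [DecidableRel G.Adj] (U : Finset V) :
    #(G.interedges U U) + #U ≤ #U * #U := by
  classical
  have hdeg : ∀ w ∈ U, #{x ∈ U | G.Adj w x} ≤ #U - 1 := fun w hw ↦ by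
    rw [← Finset.card_erase_of_mem hw]
    exact Finset.card_le_card fun x hx ↦ by grind [G.ne_of_adj]
  have hle := card_interedges_le_card_mul hdeg
  rcases Nat.eq_zero_or_pos #U with h0 | hpos
  · simp_all
  · nlinarith [Nat.sub_add_cancel hpos]

/- Removing the set `R` of rotated endpoints costs at most `s * #R` ordered adjacent pairs: each
endpoint has all its neighbours among the at most `s` vertices of `A`, at most `#R` of them by
rotation, and at most `#A - #R` of them outside `R`. -/
lemma card_interedges_self_add_le [DecidableRel G.Adj] (hs : 2 ≤ s)
    (hcyc : ∀ u (c : G.Walk u u), c.IsCycle → c.length ≤ s) (hU : U.Nonempty) :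
    #(G.interedges U U) + s ≤ s * #U := by
  classical
  induction U using Finset.strongInduction with
  | H U ih =>
    obtain ⟨A, hAU, hAs, z, hR, hnbr⟩ :=
      exists_spanningPathStarts_nonempty_forall_adj_mem hs hcyc hU
    set R := spanningPathStarts G A z
    have hRA : R ⊆ A := spanningPathStarts_subset
    have hRcard : #R ≤ #A := Finset.card_le_card hRA
    have hnbrA : ∀ w ∈ R, {x ∈ U | G.Adj w x} ⊆ A := fun w hw x hx ↦
      hnbr w hw x (Finset.mem_filter.1 hx).1 (Finset.mem_filter.1 hx).2
    have hRU : #(G.interedges R U) ≤ #R * #R :=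
      card_interedges_le_card_mul fun w hw ↦
        card_le_card_spanningPathStarts hw (hnbrA w hw) fun _ hx ↦ (Finset.mem_filter.1 hx).2
    have hRS : #(G.interedges R (U \ R)) ≤ #R * (s - #R) :=
      card_interedges_le_card_mul fun w hw ↦ calc
        #{x ∈ U \ R | G.Adj w x} ≤ #(A \ R) := Finset.card_le_card fun x hx ↦ by grind
        _ ≤ s - #R := by rw [Finset.card_sdiff_of_subset hRA]; lia
    rcases (U \ R).eq_empty_or_nonempty with hS | hS
    · have hUs : #U ≤ s :=
        (Finset.card_le_card ((Finset.sdiff_eq_empty_iff_subset.1 hS).trans hRA)).trans hAs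
      nlinarith [card_interedges_self_add_card_le (G := G) U, hU.card_pos]
    · have hSle := ih (U \ R) (Finset.sdiff_ssubset (hRA.trans hAU) hR) hS
      have hcard := Finset.card_sdiff_add_card_eq_card (hRA.trans hAU)
      have hsum : #R * (s - #R) + #R * #R = s * #R := by
        rw [← mul_add, Nat.sub_add_cancel (hRcard.trans hAs), mul_comm]
      rw [card_interedges_self_eq_sdiff_add (hRA.trans hAU), ← hcard, mul_add]
      lia

/-- The **Erdős–Gallai theorem** on long cycles. -/
theorem exists_isCycle_lt_length_of_lt_two_mul_card_edgeFinset [Fintype V] [DecidableRel G.Adj]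
    (hs : 2 ≤ s) (h : s * (Fintype.card V - 1) < 2 * #G.edgeFinset) :
    ∃ u, ∃ c : G.Walk u u, c.IsCycle ∧ s < c.length := by
  by_contra! hcyc
  rw [← sum_degrees_eq_twice_card_edges] at h
  have hdeg : ∑ v, G.degree v = #(G.interedges Finset.univ Finset.univ) := by
    simp only [card_interedges_eq_sum_card_filter,
      ← card_neighborFinset_eq_degree, neighborFinset_eq_filter]
  rcases isEmpty_or_nonempty V with _ | _
  · simp at h
  · have hle := card_interedges_self_add_le hs hcyc Finset.univ_nonempty
    rw [← hdeg, Finset.card_univ] at hle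
    have := Nat.mul_sub_one s (Fintype.card V)
    lia

end LongCycles

section EarExtension

variable {V : Type*} {G : SimpleGraph V} {c : Sym2 V → ℕ} {k : ℕ} {S T : Set V}
  {a b u v w x y : V}

/-- `u` and `v` are joined by a path of `G` inside the vertex set `S` on which the edge-coloring `c`
takes at least `k` colors. With `S = univ` this is what a `k`-color connecting coloring asks of
every pair of distinct vertices. -/
def ColorJoined (G : SimpleGraph V) (c : Sym2 V → ℕ) (k : ℕ) (S : Set V) (u v : V) : Prop :=
  ∃ p : G.Walk u v, p.IsPath ∧ (∀ x ∈ p.support, x ∈ S) ∧ k ≤ (p.edges.map c).toFinset.card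

/-- `p` is an ear of the vertex set `S`: a path with distinct endpoints in `S` and with no other
vertex in `S`. -/
structure IsEar (G : SimpleGraph V) (S : Set V) (p : G.Walk a b) : Prop where
  isPath : p.IsPath
  ne : a ≠ b
  start_mem : a ∈ S
  end_mem : b ∈ S
  eq_or_eq : ∀ x ∈ p.support, x ∈ S → x = a ∨ x = b

lemma isPath_append {p : G.Walk u v} {q : G.Walk v w} (hp : p.IsPath) (hq : q.IsPath)
    (h : ∀ x ∈ p.support, x ∈ q.support → x = v) : (p.append q).IsPath := by
  rw [Walk.isPath_def, Walk.support_append, List.nodup_append']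
  refine ⟨hp.support_nodup, hq.support_nodup.tail, fun x hxp hxq ↦ ?_⟩
  obtain rfl := h x hxp (List.mem_of_mem_tail hxq)
  have hnd := hq.support_nodup
  rw [← Walk.cons_tail_support, List.nodup_cons] at hnd
  exact hnd.1 hxq

lemma exists_eq_append_of_mem_support {p : G.Walk a b} (hx : x ∈ p.support) (hy : y ∈ p.support) :
    (∃ (q : G.Walk a x) (m : G.Walk x y) (r : G.Walk y b), p = q.append (m.append r)) ∨
      ∃ (q : G.Walk a y) (m : G.Walk y x) (r : G.Walk x b), p = q.append (m.append r) := by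
  obtain ⟨q, r, rfl⟩ := Walk.mem_support_iff_exists_append.1 hx
  rcases (Walk.mem_support_append_iff _ _).1 hy with hy | hy
  · obtain ⟨q, m, rfl⟩ := Walk.mem_support_iff_exists_append.1 hy
    exact .inr ⟨q, m, r, (Walk.append_assoc ..).symm⟩
  · obtain ⟨m, r, rfl⟩ := Walk.mem_support_iff_exists_append.1 hy
    exact .inl ⟨q, m, r, rfl⟩

namespace IsEar

lemma reverse {p : G.Walk a b} (hp : IsEar G S p) : IsEar G S p.reverse where
  isPath := hp.isPath.reverse
  ne := hp.ne.symm
  start_mem := hp.end_mem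
  end_mem := hp.start_mem
  eq_or_eq x hx hxS := (hp.eq_or_eq x (by simpa using hx) hxS).symm

end IsEar

namespace ColorJoined

lemma symm (h : ColorJoined G c k S u v) : ColorJoined G c k S v u := by
  obtain ⟨p, hp, hpS, hc⟩ := h
  exact ⟨p.reverse, hp.reverse, by simpa using hpS, by simpa using hc⟩

lemma mono (h : ColorJoined G c k S u v) (hST : S ⊆ T) : ColorJoined G c k T u v := by
  obtain ⟨p, hp, hpS, hc⟩ := h
  exact ⟨p, hp, fun x hx ↦ hST (hpS x hx), hc⟩

lemma append (h : ColorJoined G c k S u v) {q : G.Walk v w} (hq : q.IsPath)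
    (hqS : ∀ x ∈ q.support, x ∈ S → x = v) :
    ColorJoined G c k (S ∪ {x | x ∈ q.support}) u w := by
  obtain ⟨p, hp, hpS, hc⟩ := h
  refine ⟨p.append q, isPath_append hp hq fun x hxp hxq ↦ hqS x hxq (hpS x hxp), fun x hx ↦ ?_,
    hc.trans (Finset.card_le_card ?_)⟩
  · exact ((Walk.mem_support_append_iff _ _).1 hx).imp_left (hpS x)
  · rw [Walk.edges_append, List.map_append, List.toFinset_append]
    exact Finset.subset_union_left

end ColorJoined

namespace IsEar

variable {p : G.Walk a b}

lemma colorJoined_of_ne (hp : IsEar G S p) (hS : S.Pairwise (ColorJoined G c k S)) (hu : u ∈ S)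
    (hua : u ≠ a) (hy : y ∈ p.support) (hyb : y ≠ b) :
    ColorJoined G c k (S ∪ {x | x ∈ p.support}) u y := by
  obtain ⟨q, r, rfl⟩ := Walk.mem_support_iff_exists_append.1 hy
  have hbq : b ∉ q.support := fun hbq ↦
    hp.isPath.ne_of_mem_support_of_append hyb.symm hbq r.end_mem_support rfl
  have hqp := Walk.support_subset_support_append_left q r
  refine ((hS hu hp.start_mem hua).append hp.isPath.of_append_left fun x hx hxS ↦ ?_).mono
    (Set.union_subset_union_right S hqp)
  exact (hp.eq_or_eq x (hqp hx) hxS).resolve_right (ne_of_mem_of_not_mem hx hbq)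

lemma colorJoined_of_mem_of_notMem (hp : IsEar G S p) (hS : S.Pairwise (ColorJoined G c k S))
    (hu : u ∈ S) (hy : y ∈ p.support) (hyS : y ∉ S) :
    ColorJoined G c k (S ∪ {x | x ∈ p.support}) u y := by
  by_cases hua : u = a
  · have hy' : y ∈ p.reverse.support := by rwa [Walk.support_reverse, List.mem_reverse]
    have h := hp.reverse.colorJoined_of_ne hS hu (hua ▸ hp.ne) hy'
      (ne_of_mem_of_not_mem hp.start_mem hyS).symm
    simpa only [Walk.support_reverse, List.mem_reverse] using h
  · exact hp.colorJoined_of_ne hS hu hua hy (ne_of_mem_of_not_mem hp.end_mem hyS).symm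

lemma colorJoined_of_append {q : G.Walk a x} {m : G.Walk x y} {r : G.Walk y b}
    (hp : IsEar G S (q.append (m.append r))) (hS : S.Pairwise (ColorJoined G c k S)) (hxy : x ≠ y) :
    ColorJoined G c k (S ∪ {z | z ∈ (q.append (m.append r)).support}) x y := by
  have hpath : ((q.append m).append r).IsPath := Walk.append_assoc .. ▸ hp.isPath
  have hqr (z : V) (hzq : z ∈ q.support) (hzr : z ∈ r.support) : False := by
    by_cases hzx : z = x
    · exact hpath.ne_of_mem_support_of_append (hzx ▸ hxy)
        ((Walk.mem_support_append_iff _ _).2 (.inl hzq)) hzr rfl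
    · exact hp.isPath.ne_of_mem_support_of_append hzx hzq
        ((Walk.mem_support_append_iff _ _).2 (.inr hzr)) rfl
  have hbx : ColorJoined G c k (S ∪ {z | z ∈ q.support}) b x :=
    (hS hp.end_mem hp.start_mem hp.ne.symm).append hp.isPath.of_append_left fun z hz hzS ↦
      (hp.eq_or_eq z (by simp [hz]) hzS).resolve_right
        (by rintro rfl; exact hqr _ hz r.end_mem_support)
  refine (hbx.symm.append hpath.of_append_right.reverse fun z hz hzS ↦ ?_).mono ?_
  · rw [Walk.support_reverse, List.mem_reverse] at hz
    refine hzS.elim (fun hzS ↦ ?_) fun hzq ↦ (hqr z hzq hz).elim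
    exact (hp.eq_or_eq z (by simp [hz]) hzS).resolve_left
      (by rintro rfl; exact hqr _ q.start_mem_support hz)
  · rw [Set.union_assoc]
    refine Set.union_subset_union_right S fun z hz ↦ ?_
    simp_all only [Walk.support_reverse, List.mem_reverse, Walk.mem_support_append_iff,
      Set.mem_union, Set.mem_ofPred_eq]
    tauto

lemma pairwise_colorJoined_union (hp : IsEar G S p) (hS : S.Pairwise (ColorJoined G c k S)) :
    (S ∪ {x | x ∈ p.support}).Pairwise (ColorJoined G c k (S ∪ {x | x ∈ p.support})) := by
  rintro x hx y hy hxy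
  by_cases hxS : x ∈ S <;> by_cases hyS : y ∈ S
  · exact (hS hxS hyS hxy).mono Set.subset_union_left
  · exact hp.colorJoined_of_mem_of_notMem hS hxS (hy.resolve_left hyS) hyS
  · exact (hp.colorJoined_of_mem_of_notMem hS hyS (hx.resolve_left hxS) hxS).symm
  · rcases exists_eq_append_of_mem_support (hx.resolve_left hxS) (hy.resolve_left hyS) with
      ⟨q, m, r, rfl⟩ | ⟨q, m, r, rfl⟩
    · exact hp.colorJoined_of_append hS hxy
    · exact (hp.colorJoined_of_append hS hxy.symm).symm

end IsEar

lemma exists_isPath_forall_mem_support_imp_eq (p : G.Walk u v) (hv : v ∈ S) :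
    ∃ w ∈ S, ∃ q : G.Walk u w, q.IsPath ∧ q.support ⊆ p.support ∧
      ∀ x ∈ q.support, x ∈ S → x = w := by
  classical
  induction p with
  | @nil u => exact ⟨u, hv, .nil, .nil, by simp, by simp⟩
  | @cons u _ _ h p ih =>
    by_cases hu : u ∈ S
    · exact ⟨u, hu, .nil, .nil, by simp, by simp⟩
    · obtain ⟨w, hw, q, -, hqp, hqS⟩ := ih hv
      refine ⟨w, hw, (Walk.cons h q).bypass, Walk.bypass_isPath _, ?_, fun x hx hxS ↦ ?_⟩
      · exact List.Subset.trans (Walk.support_bypass_subset_support _) (List.cons_subset_cons u hqp)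
      · have hx' := Walk.support_bypass_subset_support _ hx
        rw [Walk.support_cons, List.mem_cons] at hx'
        exact hqS x (hx'.resolve_left (ne_of_mem_of_not_mem hxS hu)) hxS

lemma exists_walk_notMem_support (hG : G.IsTwoConnected) (huw : u ≠ w) (hvw : v ≠ w) :
    ∃ p : G.Walk u v, w ∉ p.support := by
  let f : G.induce {w}ᶜ →g G := (Embedding.induce {w}ᶜ).toHom
  obtain ⟨p⟩ := (hG.2.2 w).preconnected ⟨u, huw⟩ ⟨v, hvw⟩
  refine ⟨p.map f, fun hw ↦ ?_⟩
  have hw' : w ∈ p.support.map f := Walk.support_map f p ▸ hw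
  obtain ⟨⟨x, hx⟩, -, hxw⟩ := List.mem_map.1 hw'
  exact hx hxw

lemma exists_isEar_of_ne_univ (hG : G.IsTwoConnected) (hS : S.Nontrivial) (hSu : S ≠ Set.univ) :
    ∃ a b, ∃ p : G.Walk a b, IsEar G S p ∧ ∃ x ∈ p.support, x ∉ S := by
  obtain ⟨t, ht⟩ := (Set.ne_univ_iff_exists_notMem S).1 hSu
  obtain ⟨u, hu⟩ := hS.nonempty
  obtain ⟨p⟩ := hG.2.1.preconnected u t
  obtain ⟨d, -, hdS, hdS'⟩ := p.exists_boundary_dart S hu ht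
  obtain ⟨y, hyS, hyd⟩ := hS.exists_ne d.fst
  obtain ⟨r, hr⟩ := exists_walk_notMem_support hG d.adj.ne' hyd
  obtain ⟨w, hwS, q, hq, hqr, hqS⟩ := exists_isPath_forall_mem_support_imp_eq r hyS
  have hdq : d.fst ∉ q.support := fun h ↦ hr (hqr h)
  refine ⟨d.fst, w, Walk.cons d.adj q, ⟨hq.cons hdq, ?_, hdS, hwS, fun x hx hxS ↦ ?_⟩,
    d.snd, by simp, hdS'⟩
  · exact (ne_of_mem_of_not_mem q.end_mem_support hdq).symm
  · rw [Walk.support_cons, List.mem_cons] at hx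
    exact hx.imp_right (hqS x · hxS)

lemma pairwise_colorJoined_univ (hG : G.IsTwoConnected) (hS : S.Nontrivial)
    (hSc : S.Pairwise (ColorJoined G c k S)) :
    (Set.univ : Set V).Pairwise (ColorJoined G c k Set.univ) := by
  have : Finite V := Nat.finite_of_card_ne_zero (by have := hG.1; lia)
  obtain ⟨T, hST, hT⟩ := Set.Finite.exists_le_maximal
    (Set.toFinite {T : Set V | T.Pairwise (ColorJoined G c k T)}) hSc
  suffices T = Set.univ from this ▸ hT.prop
  by_contra hTu
  obtain ⟨a, b, p, hp, x, hxp, hxT⟩ := exists_isEar_of_ne_univ hG (hS.mono hST) hTu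
  exact hxT (hT.le_of_ge (hp.pairwise_colorJoined_union hT.prop) Set.subset_union_left (.inr hxp))

end EarExtension

section PeriodicColoring

variable {α : Type*} {k : ℕ} {l l' L : List α}

lemma isInfix_or_isInfix_of_append_isRotated (h : (l ++ l') ~r L) : l <:+: L ∨ l' <:+: L := by
  obtain ⟨n, hn, rfl⟩ := List.isRotated_iff_mod.1 h
  rw [List.rotate_eq_drop_append_take hn]
  rcases le_total n l.length with hnl | hln
  · right
    rw [List.drop_append_of_le_length hnl]
    exact ⟨l.drop n, _, rfl⟩
  · left
    rw [List.take_append, List.take_of_length_le hln]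
    exact ⟨_, l'.take (n - l.length), (List.append_assoc ..)⟩

lemma getElem_mem_of_isInfix (hL : L.Nodup) (hl : l <:+: L) {i j n : ℕ} (hij : i ≤ j)
    (hjn : j ≤ n) (hn : n < L.length) (hi : L[i] ∈ l) (hnl : L[n] ∈ l) : L[j] ∈ l := by
  obtain ⟨A, B, rfl⟩ := hl
  obtain ⟨d, hd, hdi⟩ := List.getElem_of_mem hi
  obtain ⟨e, he, hen⟩ := List.getElem_of_mem hnl
  have hshift (m : ℕ) (hm : m < l.length) : (A ++ l ++ B)[A.length + m]'(by grind) = l[m] := by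
    grind
  have hid : A.length + d = i := hL.getElem_inj_iff.1 ((hshift d hd).trans hdi)
  have hne : A.length + e = n := hL.getElem_inj_iff.1 ((hshift e he).trans hen)
  have hj : A.length + (j - A.length) = j := by lia
  have hjl := hshift (j - A.length) (by lia)
  simp only [hj] at hjl
  exact hjl ▸ List.getElem_mem _

-- Two residue classes `{a, a + k}` and `{b, b + k}` interleave.
lemma getElem_mem_or_getElem_add_mem_of_isInfix (hL : L.Nodup) (hk : 2 * k ≤ L.length)
    (hl : l <:+: L) {a b : ℕ} (ha : a < k) (hb : b < k) (hbl : L[b] ∈ l) (hbkl : L[b + k] ∈ l) :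
    L[a] ∈ l ∨ L[a + k] ∈ l := by
  rcases le_total b a with hba | hab
  · exact .inl (getElem_mem_of_isInfix hL hl hba (by lia) (by lia) hbl hbkl)
  · exact .inr (getElem_mem_of_isInfix hL hl (by lia) (by lia) (by lia) hbl hbkl)

lemma forall_exists_mem_idxOf_mod_eq_or [BEq α] [LawfulBEq α] (hL : L.Nodup)
    (hk : 2 * k ≤ L.length) (h : (l ++ l') ~r L) :
    (∀ a < k, ∃ e ∈ l, L.idxOf e % k = a) ∨ ∀ a < k, ∃ e ∈ l', L.idxOf e % k = a := by
  by_contra! ⟨⟨a, hak, ha⟩, b, hbk, hb⟩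
  have hal (i : ℕ) (hi : i < L.length) (hia : i % k = a) : L[i] ∉ l := fun hmem ↦
    ha _ hmem (by rwa [hL.idxOf_getElem])
  have hbl (i : ℕ) (hi : i < L.length) (hib : i % k = b) : L[i] ∉ l' := fun hmem ↦
    hb _ hmem (by rwa [hL.idxOf_getElem])
  have hor (i : ℕ) (hi : i < L.length) : L[i] ∈ l ∨ L[i] ∈ l' :=
    List.mem_append.1 (h.mem_iff.2 (List.getElem_mem hi))
  have ha₀ := Nat.mod_eq_of_lt hak
  have ha₁ := (Nat.add_mod_right a k).trans ha₀
  have hb₀ := Nat.mod_eq_of_lt hbk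
  have hb₁ := (Nat.add_mod_right b k).trans hb₀
  rcases isInfix_or_isInfix_of_append_isRotated h with hl | hl
  · exact (getElem_mem_or_getElem_add_mem_of_isInfix hL hk hl hak hbk
      ((hor _ _).resolve_right (hbl _ _ hb₀)) ((hor _ _).resolve_right (hbl _ _ hb₁))).elim
      (hal _ _ ha₀) (hal _ _ ha₁)
  · exact (getElem_mem_or_getElem_add_mem_of_isInfix hL hk hl hbk hak
      ((hor _ _).resolve_left (hal _ _ ha₀)) ((hor _ _).resolve_left (hal _ _ ha₁))).elim
      (hbl _ _ hb₀) (hbl _ _ hb₁)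

end PeriodicColoring

section CycleColoring

variable {V : Type*} {G : SimpleGraph V} {c : Sym2 V → ℕ} {k : ℕ}

lemma le_card_toFinset_map {α : Type*} {f : α → ℕ} {l : List α}
    (h : ∀ a < k, ∃ e ∈ l, f e = a) : k ≤ (l.map f).toFinset.card := by
  rw [← Finset.card_range k]
  refine Finset.card_le_card fun a ha ↦ ?_
  rw [List.mem_toFinset, List.mem_map]
  exact h a (Finset.mem_range.1 ha)

lemma pairwise_colorJoined_support_of_isCycle [DecidableEq V] {u : V} {C : G.Walk u u}
    (hC : C.IsCycle) (hk : 2 * k ≤ C.length) :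
    {x | x ∈ C.support}.Pairwise
      (ColorJoined G (fun e ↦ C.edges.idxOf e % k) k {x | x ∈ C.support}) := by
  rintro x hx y hy hxy
  obtain ⟨p, q, hpq⟩ := Walk.mem_support_iff_exists_append.1
    ((C.mem_support_rotate_iff x hx).2 hy)
  have hcyc : (p.append q).IsCycle := hpq ▸ hC.rotate hx
  have hrot : (p.edges ++ q.edges) ~r C.edges := by
    rw [← Walk.edges_append, ← hpq]
    exact C.rotate_edges x hx
  have hsub (z : V) (hz : z ∈ p.support ∨ z ∈ q.support) : z ∈ C.support := by
    rwa [← Walk.mem_support_append_iff, ← hpq, Walk.mem_support_rotate_iff] at hz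
  rcases forall_exists_mem_idxOf_mod_eq_or hC.edges_nodup (C.length_edges.symm ▸ hk) hrot with h | h
  · exact ⟨p, hcyc.isPath_of_append_left (Walk.not_nil_of_ne hxy.symm), fun z hz ↦ hsub z (.inl hz),
      le_card_toFinset_map h⟩
  · exact ColorJoined.symm ⟨q, hcyc.isPath_of_append_right (Walk.not_nil_of_ne hxy),
      fun z hz ↦ hsub z (.inr hz), le_card_toFinset_map h⟩

lemma isKColorConnecting_of_pairwise_colorJoined_univ
    (h : (Set.univ : Set V).Pairwise (ColorJoined G c k Set.univ)) : G.IsKColorConnecting k c := by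
  intro u v huv
  obtain ⟨p, hp, -, hc⟩ := h (Set.mem_univ u) (Set.mem_univ v) huv
  exact ⟨p, hp, hc⟩

lemma exists_isKColorConnecting_of_isCycle (hG : G.IsTwoConnected) {u : V} {C : G.Walk u u}
    (hC : C.IsCycle) (hk : k ≠ 0) (hkC : 2 * k ≤ C.length) :
    ∃ c, (∀ e, c e < k) ∧ G.IsKColorConnecting k c := by
  classical
  refine ⟨fun e ↦ C.edges.idxOf e % k, fun e ↦ Nat.mod_lt _ hk.pos,
    isKColorConnecting_of_pairwise_colorJoined_univ <|
      pairwise_colorJoined_univ hG ?_ (pairwise_colorJoined_support_of_isCycle hC hkC)⟩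
  exact ⟨u, C.start_mem_support, C.snd, C.getVert_mem_support 1, (C.adj_snd hC.not_nil).ne⟩

lemma le_ncard_image_edgeSet_of_isKColorConnecting [Finite V] [Nontrivial V]
    (hc : G.IsKColorConnecting k c) : k ≤ (c '' G.edgeSet).ncard := by
  obtain ⟨u, v, huv⟩ := exists_pair_ne V
  obtain ⟨p, -, hp⟩ := hc u v huv
  rw [← Set.ncard_coe_finset] at hp
  refine hp.trans (Set.ncard_le_ncard (fun a ha ↦ ?_) (Set.toFinite _))
  obtain ⟨e, he, rfl⟩ := List.mem_map.1 (List.mem_toFinset.1 ha)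
  exact ⟨e, p.edges_subset_edgeSet he, rfl⟩

lemma ccConn_eq_of_isKColorConnecting [Finite V] [Nontrivial V]
    (hc : G.IsKColorConnecting k c) (hck : ∀ e, c e < k) : G.ccConn k = k := by
  have hle : (c '' G.edgeSet).ncard ≤ k := by
    rw [← Finset.card_range k, ← Set.ncard_coe_finset]
    refine Set.ncard_le_ncard ?_ (Finset.finite_toSet _)
    rintro _ ⟨e, -, rfl⟩
    exact Finset.mem_coe.2 (Finset.mem_range.2 (hck e))
  refine IsLeast.csInf_eq
    ⟨⟨c, hc, hle.antisymm (le_ncard_image_edgeSet_of_isKColorConnecting hc)⟩, ?_⟩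
  rintro _ ⟨c', hc', rfl⟩
  exact le_ncard_image_edgeSet_of_isKColorConnecting hc'

end CycleColoring

theorem stmt_14 {V : Type*} [Fintype V] (G : SimpleGraph V) (k : ℕ) (hk : 2 ≤ k)
    (hn : 2 * k ≤ Fintype.card V) (hG : G.IsTwoConnected)
    (hm : (2 * k - 1) * (Fintype.card V - 1) + 2 ≤ 2 * G.edgeSet.ncard) :
    G.KColorConnectable k ∧ G.ccConn k = k := by
  classical
  have : Nontrivial V := Fintype.one_lt_card_iff_nontrivial.1 (by lia)
  obtain ⟨u, C, hC, hlen⟩ : ∃ u, ∃ C : G.Walk u u, C.IsCycle ∧ 2 * k - 1 < C.length := by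
    refine exists_isCycle_lt_length_of_lt_two_mul_card_edgeFinset (by lia) ?_
    rw [← coe_edgeFinset, Set.ncard_coe_finset] at hm
    lia
  obtain ⟨c, hck, hc⟩ := exists_isKColorConnecting_of_isCycle (k := k) hG hC (by lia) (by lia)
  exact ⟨⟨c, hc⟩, ccConn_eq_of_isKColorConnecting hc hck⟩
end

section
/- Let k ≥ 2 and let G = Q_{q_1,q_2,…,q_t} be a generalised θ-graph with q_1 + q_2 ≤ 2k − 2. Then G is not k-color connectable, i.e., no edge-coloring of G makes G k-color connected. -/
open SimpleGraph

/-- `G` is a generalised θ-graph with `t` paths, the `i`-th of length `q i`: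
`G` is the union of `t` pairwise internally vertex-disjoint paths sharing the same two
end-vertices `x ≠ y`, and `G` has no further vertices or edges. -/
inductive SimpleGraph.IsGenTheta {V : Type*} (G : SimpleGraph V) (t : ℕ)
    (q : Fin t → ℕ) : Prop
  | mk (x y : V) (hxy : x ≠ y) (p : ∀ _ : Fin t, G.Walk x y)
      (hpath : ∀ i, (p i).IsPath) (hlen : ∀ i, (p i).length = q i)
      (hdisj : ∀ i j, i ≠ j → ∀ w, w ∈ (p i).support → w ∈ (p j).support → w = x ∨ w = y)
      (hverts : ∀ w : V, ∃ i, w ∈ (p i).support)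
      (hedges : ∀ e : Sym2 V, e ∈ G.edgeSet ↔ ∃ i, e ∈ (p i).edges) :
      IsGenTheta G t q

/-!
A path of the θ-graph that leaves `x` along `Q i` cannot leave `Q i` before reaching `y`, since the
internal vertices of `Q i` lie on no other edges. Hence the `x`–`y` paths are exactly the `Q i`, and
the only paths from `x` to the internal vertex of `Q i` at distance `m` from `x` have length `m` or
`|Q j| + |Q i| - m` with `j ≠ i`. If some `Q i` has length at least `k`, then for `m = k - 1` both
numbers are less than `k`; otherwise all `x`–`y` paths are too short.
-/

section ThetaSystem

variable {V ι : Type*} {G : SimpleGraph V} {x y v : V}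

/-- A thread (suspended path): every edge of the graph at an internal vertex of the walk `Q` is an
edge of `Q`. Whether `Q` is a path is left as a separate hypothesis. -/
def IsThread (Q : G.Walk x y) : Prop :=
  ∀ ⦃a⦄, a ∈ Q.support → a ≠ x → a ≠ y → ∀ ⦃z⦄, G.Adj a z → s(a, z) ∈ Q.edges

theorem IsThread.of_cons {z : V} {h : G.Adj x z} {Q : G.Walk z y} (hT : IsThread (Q.cons h))
    (hQ : (Q.cons h).IsPath) : IsThread Q := by
  intro a ha haz hay b hab
  have hxQ := ((Walk.cons_isPath_iff h Q).1 hQ).2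
  have hax : a ≠ x := fun hax => hxQ (hax ▸ ha)
  have hmem := hT (List.mem_cons_of_mem _ ha) hax hay hab
  rw [Walk.edges_cons, List.mem_cons, Sym2.eq_iff] at hmem
  rcases hmem with (⟨hax', -⟩ | ⟨haz', -⟩) | hmem
  exacts [absurd hax' hax, absurd haz' haz, hmem]

theorem IsThread.exists_append_eq_or {Q : G.Walk x y} (hT : IsThread Q) (hQ : Q.IsPath)
    {w : G.Walk x v} (hw : w.IsPath) (hsnd : s(x, w.snd) ∈ Q.edges) :
    (∃ r, Q = w.append r) ∨ ∃ r, w = Q.append r := by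
  induction Q with
  | nil => exact .inr ⟨w, rfl⟩
  | @cons x z y h Q ih =>
    cases w with
    | nil => exact .inl ⟨_, rfl⟩
    | @cons _ z' _ h' w =>
      obtain rfl : z' = z := by simpa using hQ.eq_snd_of_mem_edges hsnd
      obtain ⟨hQ', -⟩ := (Walk.cons_isPath_iff h Q).1 hQ
      obtain ⟨hw', hxw⟩ := (Walk.cons_isPath_iff h' w).1 hw
      by_cases hzy : z' = y
      · subst hzy
        obtain rfl := Walk.eq_nil_iff_nil.2 (Walk.isPath_iff_nil.1 hQ')
        exact .inr ⟨w, rfl⟩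
      by_cases hnil : w.Nil
      · cases hnil
        exact .inl ⟨Q, rfl⟩
      have hmem := hT (List.mem_cons_of_mem _ Q.start_mem_support) h.ne' hzy (w.adj_snd hnil)
      have hne : s(z', w.snd) ≠ s(x, z') := by
        rw [Sym2.eq_swap, Ne, Sym2.congr_left]
        exact fun hx => hxw (hx ▸ w.getVert_mem_support 1)
      have hsnd' := (List.mem_cons.1 hmem).resolve_left hne
      rcases ih (hT.of_cons hQ) hQ' hw' hsnd' with ⟨r, rfl⟩ | ⟨r, rfl⟩
      exacts [.inl ⟨r, rfl⟩, .inr ⟨r, rfl⟩]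

theorem length_eq_of_eq_append {Q : G.Walk x y} (hQ : Q.IsPath) {w : G.Walk x v}
    {r : G.Walk v y} (h : Q = w.append r) {m : ℕ} (hm : m ≤ Q.length) (hv : Q.getVert m = v) :
    w.length = m := by
  have hle : w.length ≤ Q.length := by simp only [h, Walk.length_append, Nat.le_add_right]
  have hget : Q.getVert w.length = v := by simp [h, Walk.getVert_append]
  exact hQ.getVert_injOn hle hm (hget.trans hv.symm)

/-- The graph `G` is, up to isolated vertices, the union of a family `p` of pairwise internally
disjoint paths with common distinct ends `x` and `y`: a generalised θ-graph for an arbitrary,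
possibly infinite, index type, in which the order of the paths plays no role. -/
structure IsThetaSystem (p : ι → G.Walk x y) : Prop where
  ne : x ≠ y
  isPath : ∀ i, (p i).IsPath
  eq_or_eq : ∀ i j, i ≠ j → ∀ w, w ∈ (p i).support → w ∈ (p j).support → w = x ∨ w = y
  exists_mem_edges : ∀ e ∈ G.edgeSet, ∃ i, e ∈ (p i).edges

namespace IsThetaSystem

variable {p : ι → G.Walk x y}

theorem reverse (hp : IsThetaSystem p) : IsThetaSystem fun i => (p i).reverse where
  ne := hp.ne.symm
  isPath i := (hp.isPath i).reverse
  eq_or_eq i j hij w hi hj :=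
    (hp.eq_or_eq i j hij w (by simpa using hi) (by simpa using hj)).symm
  exists_mem_edges e he := by simpa using hp.exists_mem_edges e he

theorem eq_of_mem_support (hp : IsThetaSystem p) {i j : ι} (hi : v ∈ (p i).support)
    (hj : v ∈ (p j).support) (hvx : v ≠ x) (hvy : v ≠ y) : i = j := by
  by_contra hij
  exact (hp.eq_or_eq i j hij v hi hj).elim hvx hvy

theorem isThread (hp : IsThetaSystem p) (i : ι) : IsThread (p i) := by
  intro a ha hax hay z haz
  obtain ⟨j, hj⟩ := hp.exists_mem_edges s(a, z) haz
  obtain rfl := hp.eq_of_mem_support ha ((p j).fst_mem_support_of_mem_edges hj) hax hay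
  exact hj

theorem exists_append_eq_or (hp : IsThetaSystem p) (hvx : v ≠ x) {w : G.Walk x v}
    (hw : w.IsPath) : ∃ i, (∃ r, p i = w.append r) ∨ ∃ r, w = (p i).append r := by
  have hadj := w.adj_snd (Walk.not_nil_of_ne hvx.symm)
  obtain ⟨i, hi⟩ := hp.exists_mem_edges s(x, w.snd) hadj
  exact ⟨i, (hp.isThread i).exists_append_eq_or (hp.isPath i) hw hi⟩

theorem exists_eq_of_isPath (hp : IsThetaSystem p) {w : G.Walk x y} (hw : w.IsPath) :
    ∃ i, w = p i := by
  obtain ⟨i, ⟨r, h⟩ | ⟨r, h⟩⟩ := hp.exists_append_eq_or hp.ne.symm hw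
  · have hr : r.IsPath := (h ▸ hp.isPath i).of_append_right
    obtain rfl := Walk.eq_nil_iff_nil.2 (Walk.isPath_iff_nil.1 hr)
    exact ⟨i, by rw [h, Walk.append_nil]⟩
  · have hr : r.IsPath := (h ▸ hw).of_append_right
    obtain rfl := Walk.eq_nil_iff_nil.2 (Walk.isPath_iff_nil.1 hr)
    exact ⟨i, by rw [h, Walk.append_nil]⟩

theorem length_eq_of_start_notMem (hp : IsThetaSystem p) {i : ι} {m : ℕ} (hm : m ≤ (p i).length)
    (hv : (p i).getVert m = v) (hvy : v ≠ y) {w : G.Walk y v} (hw : w.IsPath)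
    (hx : x ∉ w.support) : w.length = (p i).length - m := by
  have hvi : v ∈ (p i).support := hv ▸ (p i).getVert_mem_support m
  have hvx : v ≠ x := fun h => hx (h ▸ w.end_mem_support)
  obtain ⟨j, ⟨r, h⟩ | ⟨r, rfl⟩⟩ := hp.reverse.exists_append_eq_or hvy hw
  · have hvj : v ∈ (p j).support := by
      rw [← List.mem_reverse, ← Walk.support_reverse, h]
      exact w.support_subset_support_append_left r w.end_mem_support
    obtain rfl := hp.eq_of_mem_support hvi hvj hvx hvy
    refine length_eq_of_eq_append (hp.isPath i).reverse h ?_ ?_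
    · rw [Walk.length_reverse]
      exact Nat.sub_le _ _
    · rw [Walk.getVert_reverse, Nat.sub_sub_self hm, hv]
  · exact absurd (Walk.support_subset_support_append_left _ r (Walk.end_mem_support _)) hx

theorem length_eq_or_of_isPath (hp : IsThetaSystem p) {i : ι} {m : ℕ} (hm : m ≤ (p i).length)
    (hv : (p i).getVert m = v) (hvx : v ≠ x) (hvy : v ≠ y) {w : G.Walk x v} (hw : w.IsPath) :
    w.length = m ∨ ∃ j ≠ i, w.length = (p j).length + ((p i).length - m) := by
  have hvi : v ∈ (p i).support := hv ▸ (p i).getVert_mem_support m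
  obtain ⟨j, ⟨r, h⟩ | ⟨r, rfl⟩⟩ := hp.exists_append_eq_or hvx hw
  · have hvj : v ∈ (p j).support :=
      h ▸ w.support_subset_support_append_left r w.end_mem_support
    obtain rfl := hp.eq_of_mem_support hvi hvj hvx hvy
    exact .inl (length_eq_of_eq_append (hp.isPath i) h hm hv)
  · have hxr : x ∉ r.support := fun hx =>
      hw.ne_of_mem_support_of_append hp.ne (p j).start_mem_support hx rfl
    have hvj : v ∉ (p j).support := fun hvj =>
      hw.ne_of_mem_support_of_append hvy hvj r.end_mem_support rfl
    refine .inr ⟨j, fun hji => hvj (hji ▸ hvi), ?_⟩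
    rw [Walk.length_append, hp.length_eq_of_start_notMem hm hv hvy hw.of_append_right hxr]

theorem exists_ne_forall_isPath_length_lt (hp : IsThetaSystem p) {k : ℕ} (hk : 2 ≤ k)
    (hlen : Pairwise fun i j => (p i).length + (p j).length ≤ 2 * k - 2) :
    ∃ v ≠ x, ∀ w : G.Walk x v, w.IsPath → w.length < k := by
  by_cases hlong : ∃ i, k ≤ (p i).length
  · obtain ⟨i, hi⟩ := hlong
    have hm : k - 1 ≤ (p i).length := by omega
    have hvx : (p i).getVert (k - 1) ≠ x := by
      rw [Ne, (hp.isPath i).getVert_eq_start_iff hm]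
      omega
    have hvy : (p i).getVert (k - 1) ≠ y := by
      rw [Ne, (hp.isPath i).getVert_eq_end_iff hm]
      omega
    refine ⟨(p i).getVert (k - 1), hvx, fun w hw => ?_⟩
    rcases hp.length_eq_or_of_isPath hm rfl hvx hvy hw with hw | ⟨j, hji, hw⟩
    · omega
    · have := hlen hji
      omega
  · push Not at hlong
    refine ⟨y, hp.ne.symm, fun w hw => ?_⟩
    obtain ⟨i, rfl⟩ := hp.exists_eq_of_isPath hw
    exact hlong i

end IsThetaSystem

theorem exists_isPath_le_length_of_kColorConnectable {k : ℕ} (hG : G.KColorConnectable k)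
    {u v : V} (huv : u ≠ v) : ∃ w : G.Walk u v, w.IsPath ∧ k ≤ w.length := by
  obtain ⟨c, hc⟩ := hG
  obtain ⟨w, hw, hcard⟩ := hc u v huv
  refine ⟨w, hw, hcard.trans ?_⟩
  simpa only [List.length_map, Walk.length_edges] using (w.edges.map c).toFinset_card_le

theorem pairwise_add_le_of_antitone {M : Type*} [AddCommMonoid M] [Preorder M] [AddLeftMono M]
    {t : ℕ} (ht : 2 ≤ t) {q : Fin t → M} (hq : Antitone q) :
    Pairwise fun i j => q i + q j ≤ q ⟨0, by omega⟩ + q ⟨1, by omega⟩ := by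
  have hlt {i j : Fin t} (hij : i < j) : q i + q j ≤ q ⟨0, by omega⟩ + q ⟨1, by omega⟩ :=
    add_le_add (hq (Nat.zero_le i)) (hq (Nat.one_le_of_lt hij))
  intro i j hij
  rcases hij.lt_or_gt with h | h
  · exact hlt h
  · exact (add_comm _ _).trans_le (hlt h)

theorem stmt_17_general {p : ι → G.Walk x y} (hp : IsThetaSystem p) {k : ℕ} (hk : 2 ≤ k)
    (hlen : Pairwise fun i j => (p i).length + (p j).length ≤ 2 * k - 2) :
    ¬ G.KColorConnectable k := by
  intro hG
  obtain ⟨v, hvx, hshort⟩ := hp.exists_ne_forall_isPath_length_lt hk hlen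
  obtain ⟨w, hw, hkw⟩ := exists_isPath_le_length_of_kColorConnectable hG hvx.symm
  exact (hshort w hw).not_ge hkw

end ThetaSystem

theorem stmt_17 {V : Type*} (G : SimpleGraph V) (k t : ℕ) (hk : 2 ≤ k) (ht : 2 ≤ t)
    (q : Fin t → ℕ) (hmono : ∀ i j : Fin t, i ≤ j → q j ≤ q i) (hpos : ∀ i, 1 ≤ q i)
    (hpen : 2 ≤ q ⟨t - 2, by omega⟩) (hG : G.IsGenTheta t q)
    (hq : q ⟨0, by omega⟩ + q ⟨1, by omega⟩ ≤ 2 * k - 2) :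
    ¬ G.KColorConnectable k := by
  obtain ⟨x, y, hxy, p, hpath, hlen, hdisj, -, hedges⟩ := hG
  refine stmt_17_general ⟨hxy, hpath, hdisj, fun e he => (hedges e).1 he⟩ hk fun i j hij => ?_
  simpa only [hlen] using (pairwise_add_le_of_antitone ht hmono hij).trans hq
end
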